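/- Let Ω ⊂ ℝ² be open and connected, and let A : Ω → ℝ² be a C¹ vector field with rot A = 0 on Ω. Suppose that for every closed piecewise-C¹ loop γ : [0,1] → Ω with γ(0) = γ(1), the circulation ∫₀¹ A(γ(t))·γ'(t) dt belongs to πℤ. Then there exists a C¹ function σ : Ω → ℂ such that |σ(x)| = 1 for all x ∈ Ω and ∂_j σ = 2iσA_j on Ω for j = 1,2. (This is the single-valued function e^{iφ} associated with the multivalued phase φ satisfying dφ = 2ω_A; the circulation hypothesis holds in particular when H_e vanishes on closure(Ω) and the flux of H_e through each hole of Ω lies in 2π(ℤ + 1/2).) -/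

import Mathlib

open MeasureTheory Complex Set

noncomputable section

abbrev Pt : Type := ℝ × ℝ

/-- First partial derivative `∂₁ f` of a function on `ℝ²`. -/
def pd1 {E : Type*} [NormedAddCommGroup E] [NormedSpace ℝ E] (f : Pt → E) (x : Pt) : E :=
  fderiv ℝ f x (1, 0)

/-- Second partial derivative `∂₂ f` of a function on `ℝ²`. -/
def pd2 {E : Type*} [NormedAddCommGroup E] [NormedSpace ℝ E] (f : Pt → E) (x : Pt) : E :=
  fderiv ℝ f x (0, 1)

/-- `rot A = ∂₁ A₂ - ∂₂ A₁`. -/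
def rot2 (A : Pt → Pt) (x : Pt) : ℝ :=
  pd1 (fun y => (A y).2) x - pd2 (fun y => (A y).1) x

/-- `div A = ∂₁ A₁ + ∂₂ A₂`. -/
def div2 (A : Pt → Pt) (x : Pt) : ℝ :=
  pd1 (fun y => (A y).1) x + pd2 (fun y => (A y).2) x

/-- Squared Euclidean norm of the magnetic gradient `∇u - iAu`. -/
def mgradSq (A : Pt → Pt) (u : Pt → ℂ) (x : Pt) : ℝ :=
  ‖pd1 u x - Complex.I * ((A x).1 : ℂ) * u x‖ ^ 2 +
    ‖pd2 u x - Complex.I * ((A x).2 : ℂ) * u x‖ ^ 2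

/-- `γ : [0,1] → Ω` is a closed piecewise-`C¹` loop contained in `Ω`. -/
def IsPiecewiseC1LoopIn (Ω : Set Pt) (γ : ℝ → Pt) : Prop :=
  ContinuousOn γ (Set.Icc 0 1) ∧ γ 0 = γ 1 ∧ (∀ t ∈ Set.Icc (0 : ℝ) 1, γ t ∈ Ω) ∧
    ∃ (n : ℕ) (t : Fin (n + 1) → ℝ), StrictMono t ∧ t 0 = 0 ∧ t (Fin.last n) = 1 ∧
      ∀ i : Fin n, ContDiffOn ℝ 1 γ (Set.Icc (t i.castSucc) (t i.succ))

/-- The circulation `∫₀¹ A(γ(t)) · γ'(t) dt` of the vector field `A` along the loop `γ`. -/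
def circulation (A : Pt → Pt) (γ : ℝ → Pt) : ℝ :=
  ∫ t in (0 : ℝ)..1, ((A (γ t)).1 * (deriv γ t).1 + (A (γ t)).2 * (deriv γ t).2)

/-!
A one-form `ω` can be integrated along piecewise `C¹` paths issued from a base point; the result
depends on the path only through an element of the group of periods. If all periods lie in `2πℤ`,
the exponential `σ` of `i` times this multivalued phase is single-valued. Close to `x`, the phase
at `y` is the phase at `x` plus the integral of `ω` along the segment from `x` to `y`, modulo `2π`.
The derivative of that integral at `y = x` is `ω x`, so `dσ = iσω`. The theorem is the case
`ω = 2(A₁ dx₁ + A₂ dx₂)`, whose periods are twice the circulations.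
-/

section PiecewiseC1On

variable {E F : Type*} [NormedAddCommGroup E] [NormedSpace ℝ E]
  [NormedAddCommGroup F] [NormedSpace ℝ F] {f g : ℝ → E} {a b : ℝ}

/-- `f` is piecewise `C¹` on `[a, b]`: one gets from `a` to `b` by finitely many steps `s < t` such
that `f` is `C¹` on `[s, t]`. The transitive closure makes concatenation and induction on the
number of pieces immediate; `IsPiecewiseC1On.exists_relSeries` recovers the partition. -/
def IsPiecewiseC1On (f : ℝ → E) (a b : ℝ) : Prop :=
  Relation.ReflTransGen (fun s t => s < t ∧ ContDiffOn ℝ 1 f (Icc s t)) a b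

namespace IsPiecewiseC1On

theorem of_contDiffOn (hab : a < b) (hf : ContDiffOn ℝ 1 f (Icc a b)) : IsPiecewiseC1On f a b :=
  .single ⟨hab, hf⟩

theorem le (hf : IsPiecewiseC1On f a b) : a ≤ b := by
  induction hf with
  | refl => exact le_rfl
  | tail _ hstep ih => exact ih.trans hstep.1.le

theorem congr (hf : IsPiecewiseC1On f a b) (hgf : EqOn g f (Icc a b)) :
    IsPiecewiseC1On g a b := by
  induction hf with
  | refl => exact .refl
  | @tail s t hfs hstep ih =>
    refine .tail (ih (hgf.mono (Icc_subset_Icc_right hstep.1.le))) ⟨hstep.1, ?_⟩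
    exact hstep.2.congr (hgf.mono (Icc_subset_Icc_left (le hfs)))

theorem comp_mul_sub {k : ℝ} (hk : 0 < k) (c : ℝ) (hf : IsPiecewiseC1On f a b) :
    IsPiecewiseC1On (fun t => f (k * t - c)) ((a + c) / k) ((b + c) / k) := by
  refine Relation.ReflTransGen.lift (fun s => (s + c) / k) (fun s t hstep => ?_) a b hf
  refine ⟨div_lt_div_of_pos_right (by linarith [hstep.1]) hk, ?_⟩
  refine hstep.2.comp (by fun_prop) fun u hu => ?_
  rw [mem_Icc, div_le_iff₀ hk, le_div_iff₀ hk] at hu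
  constructor <;> linarith [hu.1, hu.2]

theorem comp_const_sub (c : ℝ) (hf : IsPiecewiseC1On f a b) :
    IsPiecewiseC1On (fun t => f (c - t)) (c - b) (c - a) := by
  refine Relation.ReflTransGen.lift (c - ·) (fun s t hstep => ?_) _ _ hf.swap
  refine ⟨sub_lt_sub_left hstep.1 c, hstep.2.comp (by fun_prop) fun u hu => ?_⟩
  constructor <;> linarith [hu.1, hu.2]

theorem exists_relSeries (hf : IsPiecewiseC1On f a b) :
    ∃ p : RelSeries {(s, t) : ℝ × ℝ | s < t ∧ ContDiffOn ℝ 1 f (Icc s t)},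
      p.head = a ∧ p.last = b := by
  induction hf with
  | refl => exact ⟨.singleton _ a, rfl, rfl⟩
  | @tail s t _ hstep ih =>
    obtain ⟨p, hhead, rfl⟩ := ih
    exact ⟨p.snoc t hstep, by simpa using hhead, by simp⟩

theorem intervalIntegrable_apply_deriv {U : Set E} {ω : E → E →L[ℝ] F}
    (hω : ContinuousOn ω U) (hf : IsPiecewiseC1On f a b) (hU : MapsTo f (Icc a b) U) :
    IntervalIntegrable (fun t => ω (f t) (deriv f t)) volume a b := by
  induction hf with
  | refl => exact .refl
  | @tail s t hfs hstep ih =>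
    refine (ih (hU.mono_left (Icc_subset_Icc_right hstep.1.le))).trans ?_
    have hcont : ContinuousOn (fun u => ω (f u) (derivWithin f (Icc s t) u)) (Icc s t) :=
      (hω.comp hstep.2.continuousOn (hU.mono_left (Icc_subset_Icc_left (le hfs)))).clm_apply
        (hstep.2.continuousOn_derivWithin (uniqueDiffOn_Icc hstep.1) le_rfl)
    refine (hcont.intervalIntegrable_of_Icc hstep.1.le).congr_uIoo fun u hu => ?_
    rw [uIoo_of_le hstep.1.le] at hu
    simp only [derivWithin_of_mem_nhds (Icc_mem_nhds hu.1 hu.2)]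

end IsPiecewiseC1On

end PiecewiseC1On

section PiecewiseC1Path

variable {E F : Type*} [NormedAddCommGroup E] [NormedSpace ℝ E]
  [NormedAddCommGroup F] [NormedSpace ℝ F] {U : Set E} {x y z : E}

/-- `γ` is a piecewise `C¹` path that stays inside `U`. -/
structure IsPiecewiseC1PathIn (U : Set E) (γ : Path x y) : Prop where
  isPiecewiseC1On : IsPiecewiseC1On γ.extend 0 1
  range_subset : range γ ⊆ U

namespace IsPiecewiseC1PathIn

theorem segment (hxy : segment ℝ x y ⊆ U) : IsPiecewiseC1PathIn U (Path.segment x y) where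
  isPiecewiseC1On := .of_contDiffOn one_pos <|
    (ContinuousAffineMap.lineMap (R := ℝ) x y).contDiff.contDiffOn.congr <|
      Path.eqOn_extend_segment x y
  range_subset := by rwa [Path.range_segment]

theorem symm {γ : Path x y} (hγ : IsPiecewiseC1PathIn U γ) : IsPiecewiseC1PathIn U γ.symm where
  isPiecewiseC1On := by
    rw [Path.extend_symm]
    simpa using hγ.isPiecewiseC1On.comp_const_sub 1
  range_subset := by rw [Path.symm_range]; exact hγ.range_subset

theorem trans {γ : Path x y} {γ' : Path y z} (hγ : IsPiecewiseC1PathIn U γ)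
    (hγ' : IsPiecewiseC1PathIn U γ') : IsPiecewiseC1PathIn U (γ.trans γ') where
  isPiecewiseC1On := by
    have hfst : IsPiecewiseC1On (γ.trans γ').extend 0 (1 / 2) := by
      have := hγ.isPiecewiseC1On.comp_mul_sub two_pos 0
      simp only [add_zero, zero_div, sub_zero] at this
      exact this.congr fun t ht => Path.extend_trans_of_le_half _ _ ht.2
    have hsnd : IsPiecewiseC1On (γ.trans γ').extend (1 / 2) 1 := by
      have := hγ'.isPiecewiseC1On.comp_mul_sub two_pos 1
      rw [zero_add, one_add_one_eq_two, div_self two_ne_zero] at this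
      exact this.congr fun t ht => Path.extend_trans_of_half_le _ _ ht.1
    exact Relation.ReflTransGen.trans hfst hsnd
  range_subset := by
    rw [Path.trans_range]
    exact union_subset hγ.range_subset hγ'.range_subset

theorem curveIntegrable {ω : E → E →L[ℝ] F} (hω : ContinuousOn ω U) {γ : Path x y}
    (hγ : IsPiecewiseC1PathIn U γ) : CurveIntegrable ω γ := by
  have hU : MapsTo γ.extend (Icc 0 1) U := fun t _ =>
    hγ.range_subset (γ.extend_range ▸ mem_range_self t)
  refine (hγ.isPiecewiseC1On.intervalIntegrable_apply_deriv hω hU).congr_uIoo fun t ht => ?_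
  rw [uIoo_of_le zero_le_one] at ht
  rw [curveIntegralFun_def, derivWithin_of_mem_nhds (Icc_mem_nhds ht.1 ht.2)]

end IsPiecewiseC1PathIn

end PiecewiseC1Path

section Periods

variable {E F : Type*} [NormedAddCommGroup E] [NormedSpace ℝ E]
  [NormedAddCommGroup F] [NormedSpace ℝ F] {U : Set E}

theorem exists_primitive_modulo_periods {ω : E → E →L[ℝ] F} (hω : ContinuousOn ω U)
    (Λ : AddSubgroup F)
    (hΛ : ∀ (x : E) (γ : Path x x), IsPiecewiseC1PathIn U γ → ∫ᶜ z in γ, ω z ∈ Λ) :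
    ∃ φ : E → F, ∀ (x y : E) (γ : Path x y), IsPiecewiseC1PathIn U γ →
      φ x + ∫ᶜ z in γ, ω z - φ y ∈ Λ := by
  -- `base` picks one point in each piecewise `C¹` path component of `U`.
  let base (x : E) : E := Classical.epsilon fun b => ∃ p : Path b x, IsPiecewiseC1PathIn U p
  have base_eq {x y : E} {γ : Path x y} (hγ : IsPiecewiseC1PathIn U γ) : base x = base y := by
    refine congrArg Classical.epsilon (funext fun b => propext ⟨?_, ?_⟩)
    · exact fun ⟨p, hp⟩ => ⟨p.trans γ, hp.trans hγ⟩
    · exact fun ⟨p, hp⟩ => ⟨p.trans γ.symm, hp.trans hγ.symm⟩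
  have exists_path : ∀ x ∈ U, ∃ (c : F) (p : Path (base x) x),
      IsPiecewiseC1PathIn U p ∧ ∫ᶜ z in p, ω z = c := fun x hx => by
    have hxx : IsPiecewiseC1PathIn U (Path.segment x x) := .segment (by simpa using hx)
    obtain ⟨p, hp⟩ := Classical.epsilon_spec
      (p := fun b => ∃ p : Path b x, IsPiecewiseC1PathIn U p) ⟨x, _, hxx⟩
    exact ⟨_, p, hp, rfl⟩
  choose! φ hφ using exists_path
  refine ⟨φ, fun x y γ hγ => ?_⟩
  obtain ⟨p, hp, hpφ⟩ := hφ x (hγ.range_subset γ.source_mem_range)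
  obtain ⟨q, hq, hqφ⟩ := hφ y (hγ.range_subset γ.target_mem_range)
  let r : Path y (base x) := q.symm.cast rfl (base_eq hγ)
  have hr : IsPiecewiseC1PathIn U r := ⟨hq.symm.isPiecewiseC1On, hq.symm.range_subset⟩
  have hloop : ∫ᶜ z in (p.trans γ).trans r, ω z = φ x + ∫ᶜ z in γ, ω z - φ y := by
    rw [curveIntegral_trans ((hp.trans hγ).curveIntegrable hω) (hr.curveIntegrable hω),
      curveIntegral_trans (hp.curveIntegrable hω) (hγ.curveIntegrable hω), curveIntegral_cast,
      curveIntegral_symm, hpφ, hqφ, sub_eq_add_neg]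
  exact hloop ▸ hΛ _ _ ((hp.trans hγ).trans hr)

theorem exists_circle_hasFDerivAt (hU : IsOpen U) {ω : E → E →L[ℝ] ℝ} (hω : ContinuousOn ω U)
    (hper : ∀ (x : E) (γ : Path x x), IsPiecewiseC1PathIn U γ →
      ∫ᶜ z in γ, ω z ∈ AddSubgroup.zmultiples (2 * Real.pi)) :
    ∃ σ : E → Circle, ∀ x ∈ U,
      HasFDerivAt (fun y => (σ y : ℂ)) ((I * σ x) • ofRealCLM.comp (ω x)) x := by
  obtain ⟨φ, hφ⟩ := exists_primitive_modulo_periods hω _ hper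
  refine ⟨fun x => Circle.exp (φ x), fun x hx => ?_⟩
  obtain ⟨r, hr, hball⟩ := Metric.isOpen_iff.1 hU x hx
  have hlocal : ∀ y ∈ Metric.ball x r, Circle.exp (φ y) =
      Circle.exp (φ x + ∫ᶜ z in Path.segment x y, ω z) := fun y hy => by
    have hxy : segment ℝ x y ⊆ U :=
      ((convex_ball x r).segment_subset (Metric.mem_ball_self hr) hy).trans hball
    obtain ⟨m, hm⟩ := hφ x y _ (.segment hxy)
    exact (Circle.exp_eq_exp.2 ⟨m, by simp only [zsmul_eq_mul] at hm; linarith⟩).symm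
  have hint : HasFDerivAt (fun y => ∫ᶜ z in Path.segment x y, ω z) (ω x) x :=
    .curveIntegral_segment_source' <| Filter.mem_of_superset (hU.mem_nhds hx) fun z hz =>
      hω.continuousAt (hU.mem_nhds hz)
  have hexp := ((ofRealCLM.hasFDerivAt.comp x (hint.const_add (φ x))).mul_const I).cexp
  refine (hexp.congr_of_eventuallyEq ?_).congr_fderiv ?_
  · filter_upwards [Metric.ball_mem_nhds x hr] with y hy
    rw [hlocal y hy, Circle.coe_exp]
    rfl
  · ext v
    simp only [Function.comp_apply, Path.segment_same, curveIntegral_refl, add_zero,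
      ofRealCLM_apply, smul_apply, ContinuousLinearMap.comp_apply, smul_eq_mul, Circle.coe_exp]
    ring

theorem contDiffOn_one_of_hasFDerivAt (hU : IsOpen U) {f : E → F} {f' : E → E →L[ℝ] F}
    (hf : ∀ x ∈ U, HasFDerivAt f (f' x) x) (hf' : ContinuousOn f' U) : ContDiffOn ℝ 1 f U := by
  rw [← zero_add 1, contDiffOn_succ_iff_fderiv_of_isOpen hU, contDiffOn_zero]
  exact ⟨fun x hx => (hf x hx).differentiableAt.differentiableWithinAt, by simp,
    hf'.congr fun x hx => (hf x hx).fderiv⟩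

end Periods

section Plane

variable {Ω : Set Pt} {A : Pt → Pt} {x : Pt}

/-- The 1-form `A₁ dx₁ + A₂ dx₂` of the vector field `A`; it turns circulations into Mathlib's
curve integrals. -/
def oneForm (A : Pt → Pt) (x : Pt) : Pt →L[ℝ] ℝ :=
  (A x).1 • ContinuousLinearMap.fst ℝ ℝ ℝ + (A x).2 • ContinuousLinearMap.snd ℝ ℝ ℝ

theorem continuousOn_oneForm (hA : ContinuousOn A Ω) : ContinuousOn (oneForm A) Ω :=
  (hA.fst.smul continuousOn_const).add (hA.snd.smul continuousOn_const)

theorem circulation_extend (A : Pt → Pt) {x y : Pt} (γ : Path x y) :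
    circulation A γ.extend = ∫ᶜ z in γ, oneForm A z := by
  simp only [circulation, curveIntegral_eq_intervalIntegral_deriv, oneForm,
    add_apply, smul_apply, ContinuousLinearMap.coe_fst',
    ContinuousLinearMap.coe_snd', smul_eq_mul]

theorem IsPiecewiseC1PathIn.isPiecewiseC1LoopIn {γ : Path x x} (hγ : IsPiecewiseC1PathIn Ω γ) :
    IsPiecewiseC1LoopIn Ω γ.extend := by
  obtain ⟨p, hhead, hlast⟩ := hγ.isPiecewiseC1On.exists_relSeries
  refine ⟨γ.continuous_extend.continuousOn, by simp, fun t _ => ?_, p.length, p,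
    Fin.strictMono_iff_lt_succ.2 fun i => (p.step i).1, hhead, hlast, fun i => (p.step i).2⟩
  exact hγ.range_subset (γ.extend_range ▸ mem_range_self t)

end Plane

theorem statement19_general (Ω : Set Pt) (hΩo : IsOpen Ω)
    (A : Pt → Pt) (hA : ContinuousOn A Ω)
    (hcirc : ∀ γ : ℝ → Pt, IsPiecewiseC1LoopIn Ω γ →
      ∃ m : ℤ, circulation A γ = Real.pi * m) :
    ∃ σ : Pt → ℂ, ContDiffOn ℝ 1 σ Ω ∧ (∀ x ∈ Ω, ‖σ x‖ = 1) ∧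
      (∀ x ∈ Ω, pd1 σ x = 2 * Complex.I * σ x * ((A x).1 : ℂ)) ∧
      (∀ x ∈ Ω, pd2 σ x = 2 * Complex.I * σ x * ((A x).2 : ℂ)) := by
  have hω : ContinuousOn ((2 : ℝ) • oneForm A) Ω := (continuousOn_oneForm hA).const_smul 2
  obtain ⟨σ, hσ⟩ := exists_circle_hasFDerivAt hΩo hω fun x γ hγ => by
    obtain ⟨m, hm⟩ := hcirc γ.extend hγ.isPiecewiseC1LoopIn
    refine ⟨m, ?_⟩
    simp only [curveIntegral_smul, ← circulation_extend, hm, zsmul_eq_mul, smul_eq_mul]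
    ring
  have hderiv : ∀ x ∈ Ω, ∀ v, fderiv ℝ (fun y => (σ y : ℂ)) x v = 2 * I * σ x * oneForm A x v :=
    fun x hx v => by
      rw [(hσ x hx).fderiv]
      simp only [Pi.smul_apply, smul_apply, ContinuousLinearMap.comp_apply, ofRealCLM_apply,
        ofReal_mul, ofReal_ofNat, smul_eq_mul]
      ring
  have hσc : ContinuousOn (fun x => (σ x : ℂ)) Ω := fun x hx =>
    (hσ x hx).continuousAt.continuousWithinAt
  refine ⟨fun x => σ x, ?_, fun x _ => (σ x).norm_coe, fun x hx => ?_, fun x hx => ?_⟩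
  · exact contDiffOn_one_of_hasFDerivAt hΩo hσ <|
      (continuousOn_const.mul hσc).smul (continuousOn_const.clm_comp hω)
  · simp [pd1, hderiv x hx, oneForm]
  · simp [pd2, hderiv x hx, oneForm]

/-- If `A` is a `C¹` curl-free vector field on an open connected `Ω ⊂ ℝ²` all of whose
loop circulations lie in `πℤ`, then there is a `C¹` function `σ : Ω → ℂ` with `|σ| = 1`
and `∂_j σ = 2iσA_j` on `Ω` (the single-valued `e^{iφ}` with `dφ = 2ω_A`). -/
theorem statement19 (Ω : Set Pt) (hΩo : IsOpen Ω) (hΩc : IsConnected Ω)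
    (A : Pt → Pt) (hA : ContDiffOn ℝ 1 A Ω)
    (hrot : ∀ x ∈ Ω, rot2 A x = 0)
    (hcirc : ∀ γ : ℝ → Pt, IsPiecewiseC1LoopIn Ω γ →
      ∃ m : ℤ, circulation A γ = Real.pi * m) :
    ∃ σ : Pt → ℂ, ContDiffOn ℝ 1 σ Ω ∧ (∀ x ∈ Ω, ‖σ x‖ = 1) ∧
      (∀ x ∈ Ω, pd1 σ x = 2 * Complex.I * σ x * ((A x).1 : ℂ)) ∧
      (∀ x ∈ Ω, pd2 σ x = 2 * Complex.I * σ x * ((A x).2 : ℂ)) := by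
  exact statement19_general Ω hΩo A hA.continuousOn hcirc
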